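/- arXiv:2401.07373 — 2 statements merged into one kernel-verified Lean document; each statement's English description precedes it below -/
import Mathlib

section
/- Let M > M₁(Ω₁) and let u ∈ C²(Ω̄^ε) be the strictly k-convex solution of problem (2.1), and suppose in addition u ≥ u̲^ε in Ω^ε, where u̲^ε(x) = |x|²/(2c_{n,k}) − ε²/(2c_{n,k}) − M. Define ũ : Ω₁ → ℝ by ũ = u on Ω₁ \ B̄_ε(0) and ũ = −M on B̄_ε(0). Then ũ is continuous on Ω₁ and ũ is k-convex in the viscosity sense in Ω₁: for every quadratic polynomial q on ℝⁿ such that ũ − q attains a local maximum at some point of Ω₁, one has σ_k(D²q) ≥ 0. -/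
open Set Metric Filter Topology Bornology
open scoped RealInnerProductSpace

noncomputable section

/-- Euclidean `n`-space. -/
abbrev Euc (n : ℕ) := EuclideanSpace ℝ (Fin n)

/-- The `k`-th elementary symmetric polynomial of a vector `lam ∈ ℝⁿ`. -/
def esymmVec {n : ℕ} (k : ℕ) (lam : Fin n → ℝ) : ℝ :=
  ∑ S ∈ Finset.powersetCard k (Finset.univ : Finset (Fin n)), ∏ i ∈ S, lam i

/-- `σ_k(A)`: the `k`-th elementary symmetric polynomial of the eigenvalues of a
symmetric matrix `A` (junk value `0` if `A` is not symmetric). -/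
noncomputable def sigmaMat {n : ℕ} (k : ℕ) (A : Matrix (Fin n) (Fin n) ℝ) : ℝ := by
  classical exact if h : A.IsHermitian then esymmVec k h.eigenvalues else 0

/-- The eigenvalues of the symmetric matrix `A` lie in the Gårding cone
`Γ_k = {λ : σ_j(λ) > 0, j = 1, …, k}`. -/
def InGardingCone {n : ℕ} (k : ℕ) (A : Matrix (Fin n) (Fin n) ℝ) : Prop :=
  ∃ h : A.IsHermitian, ∀ j : ℕ, 1 ≤ j → j ≤ k → 0 < esymmVec j h.eigenvalues

/-- The Hessian matrix of `u` at `x`, with derivatives taken within the set `s`. -/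
noncomputable def hessianWithin {n : ℕ} (u : Euc n → ℝ) (s : Set (Euc n)) (x : Euc n) :
    Matrix (Fin n) (Fin n) ℝ :=
  fun i j => iteratedFDerivWithin ℝ 2 u s x
    ![EuclideanSpace.single i (1:ℝ), EuclideanSpace.single j (1:ℝ)]

/-- The Hessian matrix `D²u(x)` of `u` at `x`. -/
noncomputable def hessian {n : ℕ} (u : Euc n → ℝ) (x : Euc n) : Matrix (Fin n) (Fin n) ℝ :=
  fun i j => iteratedFDeriv ℝ 2 u x
    ![EuclideanSpace.single i (1:ℝ), EuclideanSpace.single j (1:ℝ)]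

/-- Operator norm of the Hessian matrix of `u` at `x` (derivatives within `s`). -/
noncomputable def hessOpNormWithin {n : ℕ} (u : Euc n → ℝ) (s : Set (Euc n)) (x : Euc n) : ℝ :=
  ‖Matrix.toEuclideanCLM (𝕜 := ℝ) (hessianWithin u s x)‖

/-- A set has smooth boundary: it is the sublevel set of a smooth defining function
with nonvanishing differential on the boundary. -/
def HasSmoothBoundary {n : ℕ} (Ω : Set (Euc n)) : Prop :=
  ∃ ρ : Euc n → ℝ, ContDiff ℝ (⊤ : ℕ∞) ρ ∧ Ω = {x | ρ x < 0} ∧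
    ∀ x ∈ frontier Ω, fderiv ℝ ρ x ≠ 0

/-- `c_{n,k} = (C(n,k))^{1/k}` where `C(n,k)` is the binomial coefficient. -/
noncomputable def cnk (n k : ℕ) : ℝ := (n.choose k : ℝ) ^ ((1:ℝ)/(k:ℝ))

/-- The radially symmetric subsolution `|x - x₀|²/(2c_{n,k}) − ε²/(2c_{n,k}) − M`. -/
noncomputable def underSol {n : ℕ} (k : ℕ) (x₀ : Euc n) (ε M : ℝ) (x : Euc n) : ℝ :=
  ‖x - x₀‖^2 / (2 * cnk n k) - ε^2 / (2 * cnk n k) - M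

/-- The closed ring `Ω̄^ε = closure (Ω₁ \ B̄_ε(x₀))`. -/
def ringSet {n : ℕ} (Ω₁ : Set (Euc n)) (x₀ : Euc n) (ε : ℝ) : Set (Euc n) :=
  closure (Ω₁ \ closedBall x₀ ε)

/-- `u` is a strictly `k`-convex solution of problem (2.1):
`σ_k(D²u) = 1` in `Ω^ε = Ω₁ \ B̄_ε(x₀)`, `u = 0` on `∂Ω₁`, `u = −M` on `∂B_ε(x₀)`,
with `u ∈ C²(Ω̄^ε)`. -/
def IsSol {n : ℕ} (k : ℕ) (Ω₁ : Set (Euc n)) (x₀ : Euc n) (ε M : ℝ) (u : Euc n → ℝ) : Prop :=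
  ContDiffOn ℝ 2 u (ringSet Ω₁ x₀ ε) ∧
  (∀ x ∈ Ω₁ \ closedBall x₀ ε,
      InGardingCone k (hessianWithin u (ringSet Ω₁ x₀ ε) x) ∧
      sigmaMat k (hessianWithin u (ringSet Ω₁ x₀ ε) x) = 1) ∧
  (∀ x ∈ frontier Ω₁, u x = 0) ∧
  (∀ x ∈ sphere x₀ ε, u x = -M)

/-- `ψ` is a strictly `k`-convex solution of problem (2.2):
`σ_k(D²ψ) = 1` in `Ω₁`, `ψ = 0` on `∂Ω₁`, with `ψ ∈ C^∞(Ω̄₁)`. -/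
def IsSol22 {n : ℕ} (k : ℕ) (Ω₁ : Set (Euc n)) (ψ : Euc n → ℝ) : Prop :=
  ContDiffOn ℝ (⊤ : ℕ∞) ψ (closure Ω₁) ∧
  (∀ x ∈ Ω₁, InGardingCone k (hessianWithin ψ (closure Ω₁) x) ∧
      sigmaMat k (hessianWithin ψ (closure Ω₁) x) = 1) ∧
  (∀ x ∈ frontier Ω₁, ψ x = 0)

/-- `u` is a strictly `k`-convex solution of the Dirichlet problem on the convex ring
`Ω = Ω₁ \ Ω̄₂`: `σ_k(D²u) = 1` in `Ω`, `u = 0` on `∂Ω₁`, `u = −M` on `∂Ω₂`,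
with `u ∈ C²(Ω̄)`. -/
def IsSolRing {n : ℕ} (k : ℕ) (Ω₁ Ω₂ : Set (Euc n)) (M : ℝ) (u : Euc n → ℝ) : Prop :=
  ContDiffOn ℝ 2 u (closure (Ω₁ \ closure Ω₂)) ∧
  (∀ x ∈ Ω₁ \ closure Ω₂,
      InGardingCone k (hessianWithin u (closure (Ω₁ \ closure Ω₂)) x) ∧
      sigmaMat k (hessianWithin u (closure (Ω₁ \ closure Ω₂)) x) = 1) ∧
  (∀ x ∈ frontier Ω₁, u x = 0) ∧
  (∀ x ∈ frontier Ω₂, u x = -M)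

/-- The extension `ũ` of `u`, equal to `−M` on the closed ball `B̄_ε(x₀)`. -/
noncomputable def extendBy {n : ℕ} (u : Euc n → ℝ) (x₀ : Euc n) (ε M : ℝ) (x : Euc n) : ℝ := by
  classical exact if x ∈ closedBall x₀ ε then -M else u x

/-- The extension `ũ` of `u`, equal to `−M` on the set `Ω₂`. -/
noncomputable def extendOn {n : ℕ} (u : Euc n → ℝ) (Ω₂ : Set (Euc n)) (M : ℝ) (x : Euc n) : ℝ := by
  classical exact if x ∈ Ω₂ then -M else u x

/-- The quadratic polynomial with Hessian `A`, linear part `b` and constant term `c`. -/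
noncomputable def quadPoly {n : ℕ} (A : Matrix (Fin n) (Fin n) ℝ) (b : Euc n) (c : ℝ)
    (x : Euc n) : ℝ :=
  (∑ i, ∑ j, A i j * x i * x j) / 2 + ⟪b, x⟫ + c

/-!
Outside the ball `ũ = u` is a `C²` function with Hessian in `Γ_k`; at a local maximum of `u - q` the
matrix `D²q - D²u` is positive semidefinite, and `σ_k` stays positive when a positive semidefinite
matrix is added to a matrix with eigenvalues in `Γ_k`. In the closed ball `ũ` attains its minimum
`-M`, because `u` lies above the subsolution, which is at least `-M` outside the ball. There
`D²q ≥ 0`, so `σ_k(D²q) ≥ 0` without any information on the regularity of `ũ` across the sphere.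

The monotonicity of `Γ_k` rests on two facts. By Weyl's inequality, adding a positive semidefinite
matrix raises each ordered eigenvalue. Raising one eigenvalue `a` changes `σ_{j+1}` at the rate
`σ_j` of the remaining eigenvalues, and these lie in `Γ_{k-1}` by Newton's inequality
`σ_j σ_{j+2} ≤ σ_{j+1}²`, which expresses the concavity of `log |p|` for the real-rooted polynomial
`p = ∏ (X + λ_i)` and its derivatives.
-/

section RealRooted

open Polynomial

theorem splits_derivative {p : ℝ[X]} (hp : p.Splits) : (derivative p).Splits := by
  rw [splits_iff_card_roots] at hp ⊢
  have hRolle := card_roots_le_derivative p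
  have hdeg := natDegree_derivative_le p
  have hcard := card_roots' (derivative p)
  omega

theorem splits_iterate_derivative {p : ℝ[X]} (hp : p.Splits) (m : ℕ) :
    (derivative^[m] p).Splits := by
  induction m with
  | zero => exact hp
  | succ m ih => rw [Function.iterate_succ_apply']; exact splits_derivative ih

-- Right minus left is `p ^ 2` times minus the second derivative of `log |p|`, which is additive
-- over the linear factors of `p`.
theorem eval_mul_eval_derivative_derivative_le_sq {R : Type*} [Field R] [LinearOrder R]
    [IsStrictOrderedRing R] {p : R[X]} (hp : p.Splits) (x : R) :
    p.eval x * (derivative (derivative p)).eval x ≤ (derivative p).eval x ^ 2 := by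
  induction hp using Submonoid.closure_induction with
  | mem q hq => rcases hq with ⟨a, rfl⟩ | ⟨a, rfl⟩ <;> simp
  | one => simp
  | mul f g _ _ hf hg =>
    simp only [derivative_mul, derivative_add, eval_add, eval_mul]
    linarith [mul_le_mul_of_nonneg_left hg (sq_nonneg (f.eval x)),
      mul_le_mul_of_nonneg_left hf (sq_nonneg (g.eval x))]

theorem coeff_mul_coeff_add_two_le_sq {p : ℝ[X]} (hp : p.Splits) (m : ℕ) :
    p.coeff m * p.coeff (m + 2) ≤ p.coeff (m + 1) ^ 2 := by
  have hcoeff (j : ℕ) : (derivative^[j] p).eval 0 = j.factorial * p.coeff j := by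
    rw [← coeff_zero_eq_eval_zero, coeff_iterate_derivative, zero_add, Nat.descFactorial_self,
      nsmul_eq_mul]
  have hlag := eval_mul_eval_derivative_derivative_le_sq (splits_iterate_derivative hp m) 0
  simp only [← Function.iterate_succ_apply' derivative, hcoeff, Nat.factorial_succ,
    Nat.succ_eq_add_one, Nat.cast_mul, Nat.cast_add, Nat.cast_one] at hlag
  have hnewton : (m + 2) * (p.coeff m * p.coeff (m + 2)) ≤ (m + 1) * p.coeff (m + 1) ^ 2 := by
    have hfac : (0 : ℝ) < (m.factorial : ℝ) ^ 2 * (m + 1) := by positivity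
    refine le_of_mul_le_mul_left ?_ hfac
    linarith
  by_contra! hlt
  nlinarith [sq_nonneg (p.coeff (m + 1))]

end RealRooted

section GardingCone

theorem esymm_zero_eq_one {R : Type*} [CommSemiring R] (s : Multiset R) : s.esymm 0 = 1 := by
  simp [Multiset.esymm]

theorem esymm_cons_succ {R : Type*} [CommSemiring R] (a : R) (s : Multiset R) (k : ℕ) :
    (a ::ₘ s).esymm (k + 1) = s.esymm (k + 1) + a * s.esymm k := by
  simp [Multiset.esymm, Multiset.powersetCard_cons, Multiset.sum_map_mul_left]

theorem esymm_mul_esymm_add_two_le_sq (s : Multiset ℝ) (k : ℕ) :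
    s.esymm k * s.esymm (k + 2) ≤ s.esymm (k + 1) ^ 2 := by
  rcases lt_or_ge s.card (k + 2) with hs | hs
  · have hzero : s.esymm (k + 2) = 0 := by
      rw [Multiset.esymm, Multiset.powersetCard_eq_empty _ hs]; simp
    rw [hzero, mul_zero]
    exact sq_nonneg _
  · obtain ⟨d, hd⟩ := Nat.exists_eq_add_of_le hs
    have hsplits : (s.map fun a => Polynomial.X + Polynomial.C a).prod.Splits :=
      Polynomial.Splits.multisetProd (by simp +contextual [Polynomial.Splits.X_add_C])
    have hlog := coeff_mul_coeff_add_two_le_sq hsplits d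
    rw [Multiset.prod_X_add_C_coeff s (by omega), Multiset.prod_X_add_C_coeff s (by omega),
      Multiset.prod_X_add_C_coeff s (by omega), show s.card - d = k + 2 by omega,
      show s.card - (d + 1) = k + 1 by omega, show s.card - (d + 2) = k by omega] at hlog
    linarith

/-- The Gårding cone `Γ_k`, as a set of multisets since membership does not depend on the order of
the entries. The condition at `j = 0` is automatic, because `σ_0 = 1`; including it makes the
inductions on `k` uniform. -/
def gardingCone (k : ℕ) : Set (Multiset ℝ) := {s | ∀ j ≤ k, 0 < s.esymm j}

-- If `σ_{j+1}(s) ≤ 0 < σ_j(s)`, positivity of `σ_{j+1}` and `σ_{j+2}` at `a ::ₘ s` forces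
-- `σ_{j+1}(s)² < σ_j(s) σ_{j+2}(s)`, against Newton's inequality.
theorem mem_gardingCone_of_cons_mem {k : ℕ} {a : ℝ} {s : Multiset ℝ}
    (h : a ::ₘ s ∈ gardingCone (k + 1)) : s ∈ gardingCone k := by
  intro j
  induction j with
  | zero => simp [esymm_zero_eq_one]
  | succ j ih =>
    intro hj
    have hprev := ih (by omega)
    have hfirst := h (j + 1) (by omega)
    have hsecond := h (j + 2) (by omega)
    rw [esymm_cons_succ] at hfirst hsecond
    have hnewton := esymm_mul_esymm_add_two_le_sq s j
    by_contra! hneg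
    nlinarith [mul_pos hprev hsecond, mul_nonneg (neg_nonneg.mpr hneg) hfirst.le]

theorem cons_mem_gardingCone_of_le {k : ℕ} {a b : ℝ} {s : Multiset ℝ} (hab : a ≤ b)
    (h : a ::ₘ s ∈ gardingCone k) : b ::ₘ s ∈ gardingCone k := by
  rintro (_ | j) hj
  · simp [esymm_zero_eq_one]
  · obtain ⟨k, rfl⟩ : ∃ m, k = m + 1 := ⟨k - 1, by omega⟩
    have hpos : 0 < s.esymm j := mem_gardingCone_of_cons_mem h j (by omega)
    calc 0 < (a ::ₘ s).esymm (j + 1) := h _ hj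
      _ = s.esymm (j + 1) + a * s.esymm j := esymm_cons_succ a s j
      _ ≤ s.esymm (j + 1) + b * s.esymm j := by gcongr
      _ = (b ::ₘ s).esymm (j + 1) := (esymm_cons_succ b s j).symm

theorem add_mem_gardingCone_of_rel_le {k : ℕ} {s t : Multiset ℝ}
    (hst : Multiset.Rel (· ≤ ·) s t) (r : Multiset ℝ) (h : s + r ∈ gardingCone k) :
    t + r ∈ gardingCone k := by
  induction hst generalizing r with
  | zero => exact h
  | @cons a b s t hab _ ih =>
    rw [Multiset.cons_add] at h ⊢
    rw [← Multiset.add_cons]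
    apply ih
    rw [Multiset.add_cons]
    exact cons_mem_gardingCone_of_le hab h

theorem map_mem_gardingCone_mono {ι : Type*} {k : ℕ} {s : Multiset ι} {f g : ι → ℝ}
    (hfg : ∀ i ∈ s, f i ≤ g i) (h : s.map f ∈ gardingCone k) : s.map g ∈ gardingCone k := by
  have hrel : Multiset.Rel (· ≤ ·) (s.map f) (s.map g) :=
    Multiset.rel_map.mpr (Multiset.rel_refl_of_refl_on hfg)
  simpa using add_mem_gardingCone_of_rel_le hrel 0 (by simpa using h)

end GardingCone

section Weyl

open RCLike
open scoped ComplexOrder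

variable {𝕜 E : Type*} [RCLike 𝕜] [NormedAddCommGroup E] [InnerProductSpace 𝕜 E]
  [FiniteDimensional 𝕜 E] {n : ℕ}

theorem re_inner_apply_self_eq_sum_eigenvalues {T : E →ₗ[𝕜] E} (hT : T.IsSymmetric)
    (hn : Module.finrank 𝕜 E = n) (x : E) :
    re (inner 𝕜 (T x) x) =
      ∑ j, hT.eigenvalues hn j * ‖inner 𝕜 (hT.eigenvectorBasis hn j) x‖ ^ 2 := by
  rw [← (hT.eigenvectorBasis hn).sum_inner_mul_inner, map_sum]
  refine Finset.sum_congr rfl fun j _ => ?_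
  rw [hT, hT.apply_eigenvectorBasis, inner_smul_right, mul_assoc, re_ofReal_mul,
    inner_mul_symm_re_eq_norm, norm_mul, norm_inner_symm, sq]

theorem eigenvalues_mul_norm_sq_le_re_inner {T : E →ₗ[𝕜] E} (hT : T.IsSymmetric)
    (hn : Module.finrank 𝕜 E = n) {i : Fin n} {x : E}
    (hx : ∀ j, i < j → inner 𝕜 (hT.eigenvectorBasis hn j) x = 0) :
    hT.eigenvalues hn i * ‖x‖ ^ 2 ≤ re (inner 𝕜 (T x) x) := by
  rw [re_inner_apply_self_eq_sum_eigenvalues hT hn,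
    ← (hT.eigenvectorBasis hn).sum_sq_norm_inner_right x, Finset.mul_sum]
  refine Finset.sum_le_sum fun j _ => ?_
  rcases lt_or_ge i j with hij | hji
  · simp [hx j hij]
  · exact mul_le_mul_of_nonneg_right (hT.eigenvalues_antitone hn hji) (sq_nonneg _)

theorem re_inner_le_eigenvalues_mul_norm_sq {T : E →ₗ[𝕜] E} (hT : T.IsSymmetric)
    (hn : Module.finrank 𝕜 E = n) {i : Fin n} {x : E}
    (hx : ∀ j, j < i → inner 𝕜 (hT.eigenvectorBasis hn j) x = 0) :
    re (inner 𝕜 (T x) x) ≤ hT.eigenvalues hn i * ‖x‖ ^ 2 := by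
  rw [re_inner_apply_self_eq_sum_eigenvalues hT hn,
    ← (hT.eigenvectorBasis hn).sum_sq_norm_inner_right x, Finset.mul_sum]
  refine Finset.sum_le_sum fun j _ => ?_
  rcases lt_or_ge j i with hji | hij
  · simp [hx j hji]
  · exact mul_le_mul_of_nonneg_right (hT.eigenvalues_antitone hn hij) (sq_nonneg _)

theorem exists_ne_zero_forall_inner_eq_zero {ι : Type*} [Fintype ι]
    (hι : Fintype.card ι < Module.finrank 𝕜 E) (v : ι → E) :
    ∃ x ≠ 0, ∀ j, inner 𝕜 (v j) x = 0 := by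
  let L : E →ₗ[𝕜] ι → 𝕜 := LinearMap.pi fun j => innerₛₗ 𝕜 (v j)
  have hker : L.ker ≠ ⊥ := LinearMap.ker_ne_bot_of_finrank_lt (by simpa using hι)
  obtain ⟨x, hxL, hx⟩ := Submodule.exists_mem_ne_zero_of_ne_bot hker
  exact ⟨x, hx, fun j => congrFun hxL j⟩

-- Only `n - 1` linear conditions put `x` both in the span of the eigenvectors of `S` with index
-- `≤ i` and in the span of those of `T` with index `≥ i`.
theorem eigenvalues_le_eigenvalues {S T : E →ₗ[𝕜] E} (hS : S.IsSymmetric) (hT : T.IsSymmetric)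
    (hST : S ≤ T) (hn : Module.finrank 𝕜 E = n) (i : Fin n) :
    hS.eigenvalues hn i ≤ hT.eigenvalues hn i := by
  obtain ⟨x, hx, hortho⟩ := exists_ne_zero_forall_inner_eq_zero (𝕜 := 𝕜)
    (ι := {j : Fin n // j ≠ i}) (by have := i.pos; simp; omega)
    (fun j => if i < j.1 then hS.eigenvectorBasis hn j else hT.eigenvectorBasis hn j)
  have hSx := eigenvalues_mul_norm_sq_le_re_inner hS hn (i := i) (x := x) fun j hij => by
    simpa [hij] using hortho ⟨j, hij.ne'⟩
  have hTx := re_inner_le_eigenvalues_mul_norm_sq hT hn (i := i) (x := x) fun j hji => by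
    simpa [hji.not_gt] using hortho ⟨j, hji.ne⟩
  have hSTx : re (inner 𝕜 (S x) x) ≤ re (inner 𝕜 (T x) x) := by
    simpa [inner_sub_left] using ((LinearMap.le_def S T).mp hST).re_inner_nonneg_left x
  exact le_of_mul_le_mul_right (hSx.trans (hSTx.trans hTx)) (by positivity)

theorem hermitian_eigenvalues_mono {ι : Type*} [Fintype ι] [DecidableEq ι] {A B : Matrix ι ι 𝕜}
    (hA : A.IsHermitian) (hB : B.IsHermitian) (hAB : (B - A).PosSemidef) (i : ι) :
    hA.eigenvalues i ≤ hB.eigenvalues i := by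
  refine eigenvalues_le_eigenvalues _ _ ?_ _ _
  rwa [LinearMap.le_def, ← map_sub, Matrix.isPositive_toEuclideanLin_iff]

end Weyl

section SecondOrder

theorem deriv_deriv_nonpos_of_isLocalMax {f : ℝ → ℝ} {x : ℝ} (hf : ContinuousAt f x)
    (hmax : IsLocalMax f x) : deriv (deriv f) x ≤ 0 := by
  by_contra! hpos
  have hmin : IsLocalMin f x := isLocalMin_of_deriv_deriv_pos hpos hmax.deriv_eq_zero hf
  have hconst : f =ᶠ[𝓝 x] fun _ => f x := by
    filter_upwards [hmin, hmax] with y hle hge using le_antisymm hge hle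
  simp [hconst.deriv.deriv_eq] at hpos

variable {E : Type*} [NormedAddCommGroup E] [NormedSpace ℝ E] {f : E → ℝ} {x : E}

theorem deriv_deriv_add_smul (hf : ContDiffAt ℝ 2 f x) (v : E) :
    deriv (deriv fun t : ℝ => f (x + t • v)) 0 = iteratedFDeriv ℝ 2 f x ![v, v] := by
  have hline (t : ℝ) : HasDerivAt (fun t : ℝ => x + t • v) v t := by
    simpa using ((hasDerivAt_id t).smul_const v).const_add x
  have hlim : Tendsto (fun t : ℝ => x + t • v) (𝓝 0) (𝓝 x) := by
    simpa using (hline 0).continuousAt.tendsto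
  have hderiv_eq : (deriv fun t : ℝ => f (x + t • v)) =ᶠ[𝓝 0]
      fun t => fderiv ℝ f (x + t • v) v := by
    filter_upwards [hlim.eventually (hf.eventually (by simp))] with t ht
    have hft := (ht.differentiableAt (by simp)).hasFDerivAt
    exact (hft.comp_hasDerivAt t (hline t) : HasDerivAt (fun t => f (x + t • v)) _ t).deriv
  have hfderiv : HasFDerivAt (fderiv ℝ f) (fderiv ℝ (fderiv ℝ f) x) (x + (0 : ℝ) • v) := by
    simpa using ((hf.fderiv_right (m := 1) (by norm_num)).differentiableAt (by simp)).hasFDerivAt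
  have hsnd : HasDerivAt (fun t : ℝ => fderiv ℝ f (x + t • v) v)
      (fderiv ℝ (fderiv ℝ f) x v v) 0 := by
    have hcomp := hfderiv.comp_hasDerivAt 0 (hline 0)
    exact (hcomp.clm_apply (hasDerivAt_const 0 v)).congr_deriv (by simp)
  rw [hderiv_eq.deriv_eq, hsnd.deriv]
  simp [iteratedFDeriv_two_apply]

theorem iteratedFDeriv_two_nonpos_of_isLocalMax (hf : ContDiffAt ℝ 2 f x)
    (hmax : IsLocalMax f x) (v : E) : iteratedFDeriv ℝ 2 f x ![v, v] ≤ 0 := by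
  have hcont : ContinuousAt (fun t : ℝ => x + t • v) 0 := by fun_prop
  have hmax' : IsLocalMax f (x + (0 : ℝ) • v) := by simpa using hmax
  have hf' : ContinuousAt f (x + (0 : ℝ) • v) := by simpa using hf.continuousAt
  rw [← deriv_deriv_add_smul hf]
  exact deriv_deriv_nonpos_of_isLocalMax (hf'.comp (f := fun t : ℝ => x + t • v) hcont)
    (hmax'.comp_continuous (g := fun t : ℝ => x + t • v) hcont)

end SecondOrder

section Hessian

open scoped Matrix

variable {n : ℕ} {w w' : Euc n → ℝ} {x : Euc n}

theorem hessianWithin_eq_hessian {s : Set (Euc n)} (hs : s ∈ 𝓝 x) :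
    hessianWithin w s x = hessian w x := by
  unfold hessianWithin hessian
  rw [iteratedFDerivWithin_congr_set (eventuallyEq_univ.mpr hs), iteratedFDerivWithin_univ]

theorem hessian_sub (hw : ContDiffAt ℝ 2 w x) (hw' : ContDiffAt ℝ 2 w' x) :
    hessian (w - w') x = hessian w x - hessian w' x := by
  ext i j
  simp [hessian, iteratedFDeriv_sub_apply hw hw']

theorem hessian_const (a : ℝ) : hessian (fun _ => a) x = 0 := by
  ext i j
  simp [hessian, iteratedFDeriv_two_apply]

theorem isHermitian_hessian (hw : ContDiffAt ℝ 2 w x) : (hessian w x).IsHermitian := by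
  ext i j
  simpa [hessian, iteratedFDeriv_two_apply] using (hw.isSymmSndFDerivAt (by simp)).eq _ _

theorem dotProduct_hessian_mulVec (v : Fin n → ℝ) :
    v ⬝ᵥ hessian w x *ᵥ v =
      iteratedFDeriv ℝ 2 w x ![WithLp.toLp 2 v, WithLp.toLp 2 v] := by
  have hv : WithLp.toLp 2 v = ∑ i, v i • EuclideanSpace.single i (1 : ℝ) := by
    ext j; simp [Finset.sum_apply, Pi.single_apply]
  simp only [hv, dotProduct, Matrix.mulVec, hessian, iteratedFDeriv_two_apply,
    Matrix.cons_val_zero, Matrix.cons_val_one, map_sum, map_smul, sum_apply, smul_apply,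
    smul_eq_mul, Finset.mul_sum]
  rw [Finset.sum_comm]
  exact Finset.sum_congr rfl fun i _ => Finset.sum_congr rfl fun j _ => by ring

theorem posSemidef_neg_hessian_of_isLocalMax (hw : ContDiffAt ℝ 2 w x) (hmax : IsLocalMax w x) :
    (-hessian w x).PosSemidef := by
  refine .of_dotProduct_mulVec_nonneg (isHermitian_hessian hw).neg fun v => ?_
  have hnonpos := iteratedFDeriv_two_nonpos_of_isLocalMax hw hmax (WithLp.toLp 2 v)
  rw [← dotProduct_hessian_mulVec] at hnonpos
  simpa [Matrix.neg_mulVec] using hnonpos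

theorem quadPoly_eq_reApplyInnerSelf (A : Matrix (Fin n) (Fin n) ℝ) (b : Euc n) (c : ℝ)
    (y : Euc n) : quadPoly A b c y =
      2⁻¹ * (Matrix.toEuclideanCLM (𝕜 := ℝ) A).reApplyInnerSelf y + ⟪b, y⟫ + c := by
  have hform : ∑ i, ∑ j, A i j * y i * y j =
      (Matrix.toEuclideanCLM (𝕜 := ℝ) A).reApplyInnerSelf y := by
    rw [ContinuousLinearMap.reApplyInnerSelf_apply, RCLike.re_to_real, real_inner_comm,
      Matrix.inner_toEuclideanCLM]
    simp only [dotProduct, Matrix.mulVec, Finset.mul_sum]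
    exact Finset.sum_congr rfl fun i _ => Finset.sum_congr rfl fun j _ => by ring
  rw [quadPoly, hform]
  ring

theorem contDiff_quadPoly (A : Matrix (Fin n) (Fin n) ℝ) (b : Euc n) (c : ℝ) {m : WithTop ℕ∞} :
    ContDiff ℝ m (quadPoly A b c) := by
  have hinner : ContDiff ℝ m fun x : Euc n => ⟪b, x⟫ := contDiff_const.inner ℝ contDiff_id
  unfold quadPoly
  fun_prop

theorem fderiv_quadPoly {A : Matrix (Fin n) (Fin n) ℝ} (hA : A.IsHermitian) (b : Euc n) (c : ℝ) :
    fderiv ℝ (quadPoly A b c) = fun y => innerSL ℝ (Matrix.toEuclideanCLM (𝕜 := ℝ) A y + b) := by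
  have hsymm := Matrix.isSymmetric_toEuclideanLin_iff.mpr hA
  funext y
  have hquad := (LinearMap.IsSymmetric.hasStrictFDerivAt_reApplyInnerSelf
    (T := Matrix.toEuclideanCLM (𝕜 := ℝ) A) hsymm y).hasFDerivAt.const_mul (2⁻¹ : ℝ)
  rw [funext (quadPoly_eq_reApplyInnerSelf A b c)]
  refine HasFDerivAt.fderiv (((hquad.add (innerSL ℝ b).hasFDerivAt).add_const c).congr_fderiv ?_)
  ext z
  simp

theorem hessian_quadPoly {A : Matrix (Fin n) (Fin n) ℝ} (hA : A.IsHermitian) (b : Euc n) (c : ℝ) :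
    hessian (quadPoly A b c) x = A := by
  have hsnd : fderiv ℝ (fderiv ℝ (quadPoly A b c)) x =
      innerSL ℝ ∘L Matrix.toEuclideanCLM (𝕜 := ℝ) A := by
    rw [fderiv_quadPoly hA]
    exact ((innerSL ℝ).hasFDerivAt.comp x
      ((Matrix.toEuclideanCLM (𝕜 := ℝ) A).hasFDerivAt.add_const b)).fderiv
  ext i j
  calc hessian (quadPoly A b c) x i j
      = ⟪Matrix.toEuclideanCLM (𝕜 := ℝ) A (EuclideanSpace.single i 1),
          EuclideanSpace.single j (1 : ℝ)⟫ := by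
        simp only [hessian, iteratedFDeriv_two_apply, hsnd]
        rfl
    _ = A j i := by simp [EuclideanSpace.inner_single_right]
    _ = A i j := hA.apply i j

theorem posSemidef_sub_hessian_of_isLocalMax (hw : ContDiffAt ℝ 2 w x)
    {A : Matrix (Fin n) (Fin n) ℝ} (hA : A.IsHermitian) {b : Euc n} {c : ℝ}
    (hmax : IsLocalMax (fun y => w y - quadPoly A b c y) x) : (A - hessian w x).PosSemidef := by
  have hq : ContDiffAt ℝ 2 (quadPoly A b c) x := (contDiff_quadPoly A b c).contDiffAt
  have hpsd : (-hessian (w - quadPoly A b c) x).PosSemidef :=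
    posSemidef_neg_hessian_of_isLocalMax (hw.sub hq) hmax
  rwa [hessian_sub hw hq, hessian_quadPoly hA, neg_sub] at hpsd

end Hessian

section SigmaMat

variable {n k : ℕ} {A B : Matrix (Fin n) (Fin n) ℝ}

theorem esymmVec_eq_multiset_esymm (k : ℕ) (lam : Fin n → ℝ) :
    esymmVec k lam = (Finset.univ.val.map lam).esymm k :=
  (Finset.esymm_map_val lam Finset.univ k).symm

theorem sigmaMat_eq_esymmVec (hA : A.IsHermitian) : sigmaMat k A = esymmVec k hA.eigenvalues :=
  dif_pos hA

theorem sigmaMat_nonneg_of_posSemidef (hA : A.PosSemidef) : 0 ≤ sigmaMat k A := by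
  rw [sigmaMat_eq_esymmVec hA.isHermitian]
  exact Finset.sum_nonneg fun _ _ => Finset.prod_nonneg fun i _ => hA.eigenvalues_nonneg i

theorem inGardingCone_iff :
    InGardingCone k A ↔
      ∃ h : A.IsHermitian, Finset.univ.val.map h.eigenvalues ∈ gardingCone k := by
  refine exists_congr fun h => ⟨fun hpos j hj => ?_, fun hpos j _ hj => ?_⟩
  · rcases Nat.eq_zero_or_pos j with rfl | hj₀
    · simp [esymm_zero_eq_one]
    · rw [← esymmVec_eq_multiset_esymm]
      exact hpos j hj₀ hj
  · rw [esymmVec_eq_multiset_esymm]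
    exact hpos j hj

namespace InGardingCone

theorem mono (hA : InGardingCone k A) (hAB : (B - A).PosSemidef) : InGardingCone k B := by
  obtain ⟨hAh, hcone⟩ := inGardingCone_iff.mp hA
  have hBh : B.IsHermitian := by simpa using hAB.isHermitian.add hAh
  exact inGardingCone_iff.mpr ⟨hBh, map_mem_gardingCone_mono
    (fun i _ => hermitian_eigenvalues_mono hAh hBh hAB i) hcone⟩

theorem sigmaMat_pos (hA : InGardingCone k A) : 0 < sigmaMat k A := by
  obtain ⟨hAh, hcone⟩ := inGardingCone_iff.mp hA
  rw [sigmaMat_eq_esymmVec hAh, esymmVec_eq_multiset_esymm]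
  exact hcone k le_rfl

end InGardingCone

end SigmaMat

section Viscosity

variable {n k : ℕ} {w w' : Euc n → ℝ} {x : Euc n}

/-- `k`-convexity of `w` at the point `x` in the viscosity sense: every quadratic polynomial `q`
for which `w - q` has a local maximum at `x` satisfies `σ_k(D²q) ≥ 0`. The notion is pointwise, so
that `w` is `k`-convex in an open set when this holds at each of its points. -/
def ViscosityKConvexAt (k : ℕ) (w : Euc n → ℝ) (x : Euc n) : Prop :=
  ∀ A : Matrix (Fin n) (Fin n) ℝ, A.IsHermitian → ∀ (b : Euc n) (c : ℝ),
    IsLocalMax (fun y => w y - quadPoly A b c y) x → 0 ≤ sigmaMat k A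

theorem ViscosityKConvexAt.congr (hw : ViscosityKConvexAt k w x) (h : w =ᶠ[𝓝 x] w') :
    ViscosityKConvexAt k w' x :=
  fun A hA b c hmax => hw A hA b c (hmax.congr (h.symm.sub .rfl))

theorem InGardingCone.viscosityKConvexAt (hcone : InGardingCone k (hessian w x))
    (hw : ContDiffAt ℝ 2 w x) : ViscosityKConvexAt k w x :=
  fun _ hA _ _ hmax =>
    (hcone.mono (posSemidef_sub_hessian_of_isLocalMax hw hA hmax)).sigmaMat_pos.le

-- Near a local minimum the constant `w x` lies below `w`, so it may replace `w` in the test.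
theorem viscosityKConvexAt_of_isLocalMin (hmin : IsLocalMin w x) : ViscosityKConvexAt k w x := by
  intro A hA b c hmax
  have hmax' : IsLocalMax (fun y => w x - quadPoly A b c y) x := by
    filter_upwards [hmin, hmax] with y hle hge
    linarith
  have hpsd := posSemidef_sub_hessian_of_isLocalMax contDiffAt_const hA hmax'
  rw [hessian_const, sub_zero] at hpsd
  exact sigmaMat_nonneg_of_posSemidef hpsd

end Viscosity

section Extension

variable {n k : ℕ} {Ω K : Set (Euc n)} {M : ℝ} {u : Euc n → ℝ} {x : Euc n}

theorem extendOn_of_mem (hx : x ∈ K) : extendOn u K M x = -M := if_pos hx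

theorem extendOn_of_notMem (hx : x ∉ K) : extendOn u K M x = u x := if_neg hx

theorem extendBy_eq_extendOn (u : Euc n → ℝ) (x₀ : Euc n) (ε M : ℝ) :
    extendBy u x₀ ε M = extendOn u (closedBall x₀ ε) M := rfl

theorem continuousOn_extendOn (hK : IsClosed K) (hu : ContinuousOn u (closure (Ω \ K)))
    (hfr : ∀ x ∈ frontier K, u x = -M) : ContinuousOn (extendOn u K M) Ω := by
  have hin : ContinuousOn (extendOn u K M) K :=
    continuousOn_const.congr fun x hx => extendOn_of_mem hx
  have hout : ContinuousOn (extendOn u K M) (closure (Ω \ K)) := by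
    refine hu.congr fun x hx => ?_
    by_cases hxK : x ∈ K
    · have hxfr : x ∈ frontier K := by
        rw [frontier_eq_closure_inter_closure]
        exact ⟨subset_closure hxK, closure_mono (fun y hy => hy.2) hx⟩
      rw [extendOn_of_mem hxK, hfr x hxfr]
    · exact extendOn_of_notMem hxK
  refine (hin.union_of_isClosed hout hK isClosed_closure).mono fun x hx => ?_
  by_cases hxK : x ∈ K
  · exact .inl hxK
  · exact .inr (subset_closure ⟨hx, hxK⟩)

theorem isLocalMin_extendOn (hΩ : IsOpen Ω) (hge : ∀ x ∈ Ω \ K, -M ≤ u x) (hxΩ : x ∈ Ω)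
    (hxK : x ∈ K) : IsLocalMin (extendOn u K M) x := by
  filter_upwards [hΩ.mem_nhds hxΩ] with y hyΩ
  rw [extendOn_of_mem hxK]
  by_cases hyK : y ∈ K
  · rw [extendOn_of_mem hyK]
  · rw [extendOn_of_notMem hyK]
    exact hge y ⟨hyΩ, hyK⟩

theorem statement15_general (hΩ : IsOpen Ω) (hK : IsClosed K)
    (hu : ContinuousOn u (closure (Ω \ K))) (hu₂ : ContDiffOn ℝ 2 u (Ω \ K))
    (hcone : ∀ x ∈ Ω \ K, InGardingCone k (hessian u x)) (hfr : ∀ x ∈ frontier K, u x = -M)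
    (hge : ∀ x ∈ Ω \ K, -M ≤ u x) :
    ContinuousOn (extendOn u K M) Ω ∧ ∀ x ∈ Ω, ViscosityKConvexAt k (extendOn u K M) x := by
  refine ⟨continuousOn_extendOn hK hu hfr, fun x hx => ?_⟩
  by_cases hxK : x ∈ K
  · exact viscosityKConvexAt_of_isLocalMin (isLocalMin_extendOn hΩ hge hx hxK)
  · have hnhds : Ω \ K ∈ 𝓝 x := (hΩ.sdiff hK).mem_nhds ⟨hx, hxK⟩
    refine ((hcone x ⟨hx, hxK⟩).viscosityKConvexAt (hu₂.contDiffAt hnhds)).congr ?_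
    filter_upwards [hnhds] with y hy using (extendOn_of_notMem hy.2).symm

end Extension

theorem neg_le_underSol {n k : ℕ} {x₀ x : Euc n} {ε : ℝ} (M : ℝ) (hε : 0 ≤ ε)
    (hx : x ∉ closedBall x₀ ε) : -M ≤ underSol k x₀ ε M x := by
  have hlt : ε < ‖x - x₀‖ := by simpa [dist_eq_norm] using hx
  have hc : 0 ≤ cnk n k := by unfold cnk; positivity
  have hle : ε ^ 2 / (2 * cnk n k) ≤ ‖x - x₀‖ ^ 2 / (2 * cnk n k) := by gcongr
  unfold underSol
  linarith

theorem IsSol.inGardingCone_hessian {n k : ℕ} {Ω₁ : Set (Euc n)} {x₀ : Euc n} {ε M : ℝ}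
    {u : Euc n → ℝ} (hu : IsSol k Ω₁ x₀ ε M u) (hΩ : IsOpen Ω₁) {x : Euc n}
    (hx : x ∈ Ω₁ \ closedBall x₀ ε) : InGardingCone k (hessian u x) := by
  have hring : ringSet Ω₁ x₀ ε ∈ 𝓝 x :=
    mem_of_superset ((hΩ.sdiff isClosed_closedBall).mem_nhds hx) subset_closure
  rw [← hessianWithin_eq_hessian hring]
  exact (hu.2.1 x hx).1

/-- the extension `ũ` is continuous and `k`-convex in the viscosity
sense in `Ω₁`. -/
theorem statement15 {n k : ℕ} (hk : 1 ≤ k) (hkn : k ≤ n)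
    (Ω₁ : Set (Euc n)) (hΩo : IsOpen Ω₁) (hΩconv : Convex ℝ Ω₁)
    (hΩb : IsBounded Ω₁) (hΩs : HasSmoothBoundary Ω₁)
    (ε₀ : ℝ) (hε₀ : 0 < ε₀) (hball : closedBall (0 : Euc n) ε₀ ⊆ Ω₁)
    (ψ : Euc n → ℝ) (hψ : IsSol22 k Ω₁ ψ)
    (M₁ : ℝ) (hM₁ : 0 < M₁) (hM₁ψ : ∀ x ∈ closure Ω₁, -ψ x < M₁)
    (hM₁sub : ∀ ε ∈ Ioo (0:ℝ) ε₀, ∀ x ∈ frontier Ω₁, underSol k (0 : Euc n) ε M₁ x ≤ 0)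
    (M : ℝ) (hM : M₁ < M)
    (ε : ℝ) (hε : ε ∈ Ioo (0:ℝ) ε₀)
    (u : Euc n → ℝ) (hu : IsSol k Ω₁ (0 : Euc n) ε M u)
    (hsub : ∀ x ∈ Ω₁ \ closedBall (0 : Euc n) ε, underSol k (0 : Euc n) ε M x ≤ u x) :
    ContinuousOn (extendBy u (0 : Euc n) ε M) Ω₁ ∧
    ∀ A : Matrix (Fin n) (Fin n) ℝ, A.IsHermitian → ∀ (b : Euc n) (c : ℝ),
      (∃ x₀ ∈ Ω₁, IsLocalMax
        (fun x => extendBy u (0 : Euc n) ε M x - quadPoly A b c x) x₀) →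
      0 ≤ sigmaMat k A := by
  obtain ⟨hcont, hvisc⟩ := statement15_general hΩo isClosed_closedBall hu.1.continuousOn
    (hu.1.mono subset_closure) (fun _ => hu.inGardingCone_hessian hΩo)
    (fun x hx => hu.2.2.2 x (frontier_closedBall_subset_sphere hx))
    (fun x hx => (neg_le_underSol M hε.1.le hx.2).trans (hsub x hx))
  rw [extendBy_eq_extendOn]
  exact ⟨hcont, fun A hA b c ⟨x, hx, hmax⟩ => hvisc x hx A hA b c hmax⟩
end
end

section
/- Let 1 ≤ k ≤ n and C > 0. Define φ : ℝⁿ \ {0} → ℝ as follows: φ(x) = −C|x|^{2−n/k} if n > 2k; φ(x) = C log|x| if n = 2k; φ(x) = C|x|^{2−n/k} if n < 2k. Then in each case φ is smooth on ℝⁿ \ {0} and satisfies σ_k(D²φ(x)) = 0 for every x ≠ 0. -/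
open Set Metric Filter Topology Bornology
open scoped RealInnerProductSpace

noncomputable section

/-!
The Hessian of a radial function `f(|x|)` at a point with `|x| = r > 0` is a rank-one perturbation
of a multiple of the identity: it has the eigenvalue `f''(r)` in the radial direction and
`f'(r) / r` in the `n - 1` tangential ones. Hence
`σ_k(D²φ) = C(n-1, k) (f'/r)^k + C(n-1, k-1) f'' (f'/r)^(k-1)`.
Since `k C(n-1, k) = (n - k) C(n-1, k-1)`, this vanishes as soon as `k r f'' = (k - n) f'`, which is
solved by `f'(r) = c r^(1-n/k)`, that is, by `f(r) = C r^(2-n/k)`, or `f(r) = C log r` if `n = 2k`.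
-/

lemma add_one_mul_choose_add_one {R : Type*} [CommRing R] (m k : ℕ) :
    (k + 1 : R) * m.choose (k + 1) = (m - k) * m.choose k := by
  have h : ((m : R) + 1) * m.choose k = (m.choose k + m.choose (k + 1)) * (k + 1) := by
    exact_mod_cast congrArg (Nat.cast : ℕ → R) (Nat.add_one_mul_choose_eq m k)
  linear_combination -h

lemma esymm_cons {R : Type*} [CommSemiring R] (s : Multiset R) (a : R) (k : ℕ) :
    (a ::ₘ s).esymm (k + 1) = s.esymm (k + 1) + a * s.esymm k := by
  simp [Multiset.esymm, Multiset.powersetCard_cons, Multiset.map_map, Multiset.sum_map_mul_left]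

lemma esymm_replicate {R : Type*} [CommSemiring R] (m k : ℕ) (a : R) :
    (Multiset.replicate m a).esymm k = m.choose k * a ^ k := by
  have h : ∀ s ∈ (Multiset.replicate m a).powersetCard k, s.prod = a ^ k := fun s hs ↦ by
    obtain ⟨hle, hcard⟩ := Multiset.mem_powersetCard.1 hs
    rw [Multiset.eq_replicate.2 ⟨hcard, fun b hb ↦
      Multiset.eq_of_mem_replicate (Multiset.mem_of_le hle hb)⟩, Multiset.prod_replicate]
  simp [Multiset.esymm, Multiset.map_congr rfl h]

section RankOnePerturbation

open Matrix Polynomial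

lemma charpoly_scalar_add_vecMulVec {ι R : Type*} [Fintype ι] [DecidableEq ι] [Nonempty ι]
    [CommRing R] (a : R) (u v : ι → R) :
    (scalar ι a + vecMulVec u v).charpoly =
      (X - C (a + u ⬝ᵥ v)) * (X - C a) ^ (Fintype.card ι - 1) := by
  have h : scalar ι a + vecMulVec u v = vecMulVec u v - scalar ι (-a) := by
    rw [map_neg, sub_neg_eq_add, add_comm]
  obtain ⟨m, hm⟩ := Nat.exists_eq_add_one.2 (Fintype.card_pos (α := ι))
  rw [h, charpoly_sub_scalar, charpoly_vecMulVec, hm]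
  simp only [smul_eq_C_mul, add_tsub_cancel_right, sub_comp, pow_comp, X_comp, mul_comp, C_comp,
    map_neg, map_add]
  ring

lemma sigmaMat_eq_esymm_roots_charpoly {n : ℕ} (k : ℕ) {A : Matrix (Fin n) (Fin n) ℝ}
    (hA : A.IsHermitian) : sigmaMat k A = A.charpoly.roots.esymm k := by
  rw [sigmaMat, dif_pos hA, hA.roots_charpoly_eq_eigenvalues]
  exact (Finset.esymm_map_val _ _ _).symm

lemma sigmaMat_scalar_add_smul_vecMulVec {n : ℕ} [NeZero n] (k : ℕ) (a b : ℝ) (v : Fin n → ℝ) :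
    sigmaMat (k + 1) (scalar (Fin n) a + b • vecMulVec v v) =
      (n - 1).choose (k + 1) * a ^ (k + 1) + (a + b * (v ⬝ᵥ v)) * ((n - 1).choose k * a ^ k) := by
  have hA : (scalar (Fin n) a + b • vecMulVec v v).IsHermitian := by
    ext i j
    by_cases h : i = j
    · simp [h]
    · simp [vecMulVec_apply, h, Ne.symm h, mul_comm]
  rw [sigmaMat_eq_esymm_roots_charpoly _ hA, ← smul_vecMulVec, charpoly_scalar_add_vecMulVec,
    roots_mul (mul_ne_zero (X_sub_C_ne_zero _) (pow_ne_zero _ (X_sub_C_ne_zero _))), roots_pow,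
    roots_X_sub_C, roots_X_sub_C, Multiset.nsmul_singleton, Multiset.singleton_add, esymm_cons,
    esymm_replicate, esymm_replicate, Fintype.card_fin, smul_dotProduct, smul_eq_mul]

end RankOnePerturbation

section RadialFunctions

variable {E : Type*} [NormedAddCommGroup E] [InnerProductSpace ℝ E]

lemma contDiffOn_comp_norm {m : WithTop ℕ∞} {f : ℝ → ℝ} (hf : ContDiffOn ℝ m f (Ioi 0)) :
    ContDiffOn ℝ m (fun x : E ↦ f ‖x‖) {x | x ≠ 0} :=
  hf.comp (contDiffOn_id.norm ℝ fun _ hx ↦ hx) fun _ hx ↦ norm_pos_iff.2 hx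

lemma contDiffOn_mul_norm_rpow {m : WithTop ℕ∞} (C p : ℝ) :
    ContDiffOn ℝ m (fun x : E ↦ C * ‖x‖ ^ p) {x | x ≠ 0} :=
  contDiffOn_comp_norm (f := fun r ↦ C * r ^ p) <| contDiffOn_const.mul <|
    contDiffOn_id.rpow_const_of_ne fun _ hr ↦ (mem_Ioi.1 hr).ne'

lemma contDiffOn_mul_log_norm {m : WithTop ℕ∞} (C : ℝ) :
    ContDiffOn ℝ m (fun x : E ↦ C * Real.log ‖x‖) {x | x ≠ 0} :=
  contDiffOn_comp_norm (f := fun r ↦ C * Real.log r) <| contDiffOn_const.mul <|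
    contDiffOn_id.log fun _ hr ↦ (mem_Ioi.1 hr).ne'

lemma hasFDerivAt_norm_of_ne_zero {x : E} (hx : x ≠ 0) :
    HasFDerivAt (fun y : E ↦ ‖y‖) (‖x‖⁻¹ • innerSL ℝ x) x := by
  have h := (hasStrictFDerivAt_norm_sq x).hasFDerivAt.sqrt (by simpa using hx)
  simp only [Real.sqrt_sq (norm_nonneg _)] at h
  refine h.congr_fderiv ?_
  match_scalars
  field_simp

lemma hasFDerivAt_comp_norm {f : ℝ → ℝ} {f' : ℝ} {x : E} (hf : HasDerivAt f f' ‖x‖) (hx : x ≠ 0) :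
    HasFDerivAt (fun y : E ↦ f ‖y‖) ((f' / ‖x‖) • innerSL ℝ x) x :=
  (hf.comp_hasFDerivAt x (hasFDerivAt_norm_of_ne_zero hx)).congr_fderiv <| by
    rw [smul_smul, div_eq_mul_inv]

lemma fderiv_fderiv_comp_norm_apply {f f' : ℝ → ℝ} {f'' : ℝ} {x : E}
    (hf : ∀ᶠ r in 𝓝 ‖x‖, HasDerivAt f (f' r) r) (hf' : HasDerivAt f' f'' ‖x‖) (hx : x ≠ 0)
    (v w : E) :
    fderiv ℝ (fderiv ℝ fun y : E ↦ f ‖y‖) x v w =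
      f' ‖x‖ / ‖x‖ * ⟪v, w⟫ + (f'' - f' ‖x‖ / ‖x‖) / ‖x‖ ^ 2 * (⟪x, v⟫ * ⟪x, w⟫) := by
  have hr : ‖x‖ ≠ 0 := norm_ne_zero_iff.2 hx
  have hgrad : fderiv ℝ (fun y : E ↦ f ‖y‖) =ᶠ[𝓝 x] fun y ↦ (f' ‖y‖ / ‖y‖) • innerSL ℝ y := by
    filter_upwards [continuous_norm.continuousAt.eventually hf, isOpen_ne.mem_nhds hx] with y hfy hy
      using (hasFDerivAt_comp_norm hfy hy).fderiv
  have hcoeff : HasFDerivAt (fun y : E ↦ f' ‖y‖ / ‖y‖)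
      (((f'' * ‖x‖ - f' ‖x‖) / ‖x‖ ^ 2 / ‖x‖) • innerSL ℝ x) x :=
    hasFDerivAt_comp_norm (f := fun r ↦ f' r / r)
      (by simpa using hf'.fun_div (hasDerivAt_id _) hr) hx
  rw [hgrad.fderiv_eq, (hcoeff.fun_smul (innerSL ℝ (E := E)).hasFDerivAt).fderiv]
  change f' ‖x‖ / ‖x‖ * ⟪v, w⟫ + (f'' * ‖x‖ - f' ‖x‖) / ‖x‖ ^ 2 / ‖x‖ * ⟪x, v⟫ * ⟪x, w⟫ = _
  field_simp

end RadialFunctions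

section RadialHessian

variable {n : ℕ} {f f' : ℝ → ℝ} {f'' : ℝ} {x : Euc n}

lemma hessian_comp_norm (hf : ∀ᶠ r in 𝓝 ‖x‖, HasDerivAt f (f' r) r)
    (hf' : HasDerivAt f' f'' ‖x‖) (hx : x ≠ 0) :
    hessian (fun y ↦ f ‖y‖) x = Matrix.scalar (Fin n) (f' ‖x‖ / ‖x‖) +
      ((f'' - f' ‖x‖ / ‖x‖) / ‖x‖ ^ 2) • Matrix.vecMulVec x x := by
  ext i j
  rw [hessian, iteratedFDeriv_two_apply]
  simp [fderiv_fderiv_comp_norm_apply hf hf' hx, EuclideanSpace.inner_single_right,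
    Matrix.vecMulVec_apply, Matrix.diagonal_apply, eq_comm]

lemma sigmaMat_hessian_comp_norm (k : ℕ) (hf : ∀ᶠ r in 𝓝 ‖x‖, HasDerivAt f (f' r) r)
    (hf' : HasDerivAt f' f'' ‖x‖) (hx : x ≠ 0) :
    sigmaMat (k + 1) (hessian (fun y ↦ f ‖y‖) x) =
      (n - 1).choose (k + 1) * (f' ‖x‖ / ‖x‖) ^ (k + 1) +
        f'' * ((n - 1).choose k * (f' ‖x‖ / ‖x‖) ^ k) := by
  have : NeZero n := ⟨fun h ↦ by subst h; exact hx (Subsingleton.elim _ _)⟩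
  have hdot : (x : Fin n → ℝ) ⬝ᵥ x = ‖x‖ ^ 2 := by
    simp only [dotProduct, EuclideanSpace.real_norm_sq_eq, ← pow_two]
  rw [hessian_comp_norm hf hf' hx, sigmaMat_scalar_add_smul_vecMulVec, hdot,
    div_mul_cancel₀ _ (pow_ne_zero 2 (norm_ne_zero_iff.2 hx)), add_sub_cancel]

lemma sigmaMat_hessian_comp_norm_eq_zero {k : ℕ} (hk : 1 ≤ k)
    (hf : ∀ᶠ r in 𝓝 ‖x‖, HasDerivAt f (f' r) r) (hf' : HasDerivAt f' f'' ‖x‖) (hx : x ≠ 0)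
    (hode : k * ‖x‖ * f'' = (k - n) * f' ‖x‖) :
    sigmaMat k (hessian (fun y ↦ f ‖y‖) x) = 0 := by
  obtain ⟨j, rfl⟩ := Nat.exists_eq_add_of_le' hk
  obtain ⟨m, rfl⟩ : ∃ m, n = m + 1 := Nat.exists_eq_succ_of_ne_zero fun h ↦ by
    subst h; exact hx (Subsingleton.elim _ _)
  have hf'' : (j + 1) * f'' = (j - m) * (f' ‖x‖ / ‖x‖) := by
    push_cast at hode
    field_simp [norm_ne_zero_iff.2 hx]
    linear_combination hode
  have hchoose := add_one_mul_choose_add_one (R := ℝ) m j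
  rw [sigmaMat_hessian_comp_norm j hf hf' hx, add_tsub_cancel_right]
  refine (mul_eq_zero_iff_left (Nat.cast_add_one_ne_zero j : (j + 1 : ℝ) ≠ 0)).1 ?_
  linear_combination (f' ‖x‖ / ‖x‖) ^ (j + 1) * hchoose +
    m.choose j * (f' ‖x‖ / ‖x‖) ^ j * hf''

lemma sigmaMat_hessian_mul_norm_rpow {k : ℕ} (hk : 1 ≤ k) (C : ℝ) (hx : x ≠ 0) :
    sigmaMat k (hessian (fun y : Euc n ↦ C * ‖y‖ ^ ((2 : ℝ) - n / k)) x) = 0 := by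
  have hr : 0 < ‖x‖ := norm_pos_iff.2 hx
  have hk0 : (k : ℝ) ≠ 0 := by positivity
  set p : ℝ := 2 - n / k with hp
  have hf : ∀ᶠ r in 𝓝 ‖x‖, HasDerivAt (fun r ↦ C * r ^ p) (C * (p * r ^ (p - 1))) r := by
    filter_upwards [lt_mem_nhds hr] with r hr
      using (Real.hasDerivAt_rpow_const (.inl hr.ne')).const_mul C
  have hf' : HasDerivAt (fun r ↦ C * (p * r ^ (p - 1)))
      (C * (p * ((p - 1) * ‖x‖ ^ (p - 1 - 1)))) ‖x‖ :=
    ((Real.hasDerivAt_rpow_const (.inl hr.ne')).const_mul p).const_mul C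
  refine sigmaMat_hessian_comp_norm_eq_zero (f := fun r ↦ C * r ^ p) hk hf hf' hx ?_
  have hkp : k * (p - 1) = k - n := by rw [hp]; field_simp; ring
  rw [Real.rpow_sub_one hr.ne' (p - 1), ← hkp]
  field_simp

lemma sigmaMat_hessian_mul_log_norm {k : ℕ} (hk : 1 ≤ k) (hn : n = 2 * k) (C : ℝ) (hx : x ≠ 0) :
    sigmaMat k (hessian (fun y : Euc n ↦ C * Real.log ‖y‖) x) = 0 := by
  have hr : 0 < ‖x‖ := norm_pos_iff.2 hx
  have hf : ∀ᶠ r in 𝓝 ‖x‖, HasDerivAt (fun r ↦ C * Real.log r) (C * r⁻¹) r := by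
    filter_upwards [lt_mem_nhds hr] with r hr using (Real.hasDerivAt_log hr.ne').const_mul C
  have hf' : HasDerivAt (fun r ↦ C * r⁻¹) (C * -(‖x‖ ^ 2)⁻¹) ‖x‖ :=
    (hasDerivAt_inv hr.ne').const_mul C
  refine sigmaMat_hessian_comp_norm_eq_zero (f := fun r ↦ C * Real.log r) hk hf hf' hx ?_
  have hn' : (n : ℝ) = 2 * k := by exact_mod_cast hn
  rw [hn']
  field_simp
  ring

end RadialHessian

theorem statement18_general {n k : ℕ} (hk : 1 ≤ k) (C : ℝ) :
    (ContDiffOn ℝ (⊤ : ℕ∞) (fun x : Euc n ↦ C * ‖x‖ ^ ((2 : ℝ) - n / k)) {x | x ≠ 0} ∧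
      ∀ x : Euc n, x ≠ 0 →
        sigmaMat k (hessian (fun y : Euc n ↦ C * ‖y‖ ^ ((2 : ℝ) - n / k)) x) = 0) ∧
    (n = 2 * k →
      ContDiffOn ℝ (⊤ : ℕ∞) (fun x : Euc n ↦ C * Real.log ‖x‖) {x | x ≠ 0} ∧
      ∀ x : Euc n, x ≠ 0 →
        sigmaMat k (hessian (fun y : Euc n ↦ C * Real.log ‖y‖) x) = 0) :=
  ⟨⟨contDiffOn_mul_norm_rpow C _, fun _ ↦ sigmaMat_hessian_mul_norm_rpow hk C⟩,
    fun hn ↦ ⟨contDiffOn_mul_log_norm C, fun _ ↦ sigmaMat_hessian_mul_log_norm hk hn C⟩⟩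

/-- the radial functions `−C|x|^{2−n/k}`, `C log|x|`, `C|x|^{2−n/k}`
are smooth away from the origin and solve `σ_k(D²φ) = 0` there. -/
theorem statement18 {n k : ℕ} (hk : 1 ≤ k) (hkn : k ≤ n) (C : ℝ) (hC : 0 < C) :
    (2 * k < n →
      ContDiffOn ℝ (⊤ : ℕ∞)
        (fun x : Euc n => -C * ‖x‖ ^ ((2:ℝ) - (n : ℝ)/(k : ℝ))) {x : Euc n | x ≠ 0} ∧
      ∀ x : Euc n, x ≠ 0 →
        sigmaMat k (hessian (fun y : Euc n => -C * ‖y‖ ^ ((2:ℝ) - (n : ℝ)/(k : ℝ))) x) = 0) ∧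
    (n = 2 * k →
      ContDiffOn ℝ (⊤ : ℕ∞)
        (fun x : Euc n => C * Real.log ‖x‖) {x : Euc n | x ≠ 0} ∧
      ∀ x : Euc n, x ≠ 0 →
        sigmaMat k (hessian (fun y : Euc n => C * Real.log ‖y‖) x) = 0) ∧
    (n < 2 * k →
      ContDiffOn ℝ (⊤ : ℕ∞)
        (fun x : Euc n => C * ‖x‖ ^ ((2:ℝ) - (n : ℝ)/(k : ℝ))) {x : Euc n | x ≠ 0} ∧
      ∀ x : Euc n, x ≠ 0 →
        sigmaMat k (hessian (fun y : Euc n => C * ‖y‖ ^ ((2:ℝ) - (n : ℝ)/(k : ℝ))) x) = 0) := by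
  exact ⟨fun _ ↦ (statement18_general hk (-C)).1, (statement18_general hk C).2,
    fun _ ↦ (statement18_general hk C).1⟩
end
end
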